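/- (Stability; the algebra A_∞° is naturally isomorphic to the algebra A_∞ of conjugacy classes of finite permutations of ℕ.) For all Young diagrams Δ₁, Δ₂ and every integer N ≥ max(|Δ₁|,|Δ₂|), the identity ρ_{N−|Δ₁|}(Δ₁) ∘ ρ_{N−|Δ₂|}(Δ₂) = Σ_{n=max(|Δ₁|,|Δ₂|)}^{min(N, |Δ₁|+|Δ₂|)} ρ_{N−n}({Δ₁Δ₂}_n) holds in the center A_N of ℚ[S_N]. In particular, the products of padded class sums in S_N are, for all N, expressed through the finitely many elements {Δ₁Δ₂}_n with n ≤ |Δ₁|+|Δ₂|, so the structure constants stabilize as N → ∞. -/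

import Mathlib

open scoped Classical

/-- The full cycle type of a permutation of `Fin n`, including fixed points
(i.e. rows of length 1). -/
noncomputable def fullCycleType {n : ℕ} (g : Equiv.Perm (Fin n)) : Multiset ℕ :=
  g.cycleType + Multiset.replicate (n - g.cycleType.sum) 1

/-- `Δ^k` : the Young diagram obtained from `Δ` by adding `k` rows of length 1,
realized as a partition of a given `m ≥ |Δ| `. -/
def padTo {n : ℕ} (Δ : n.Partition) (m : ℕ) (h : n ≤ m) : m.Partition where
  parts := Δ.parts + Multiset.replicate (m - n) 1
  parts_pos := by
    intro i hi
    rcases Multiset.mem_add.mp hi with h1 | h2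
    · exact Δ.parts_pos h1
    · simp [Multiset.eq_of_mem_replicate h2]
  parts_sum := by
    simp [Δ.parts_sum]
    omega

/-- The class sum `G_n(Δ)` : sum of all permutations of cycle type `Δ` in the group
algebra `ℚ[S_n]`. -/
noncomputable def classSum (n : ℕ) (Δ : n.Partition) :
    MonoidAlgebra ℚ (Equiv.Perm (Fin n)) :=
  ∑ g ∈ Finset.univ.filter (fun g => fullCycleType g = Δ.parts),
    MonoidAlgebra.single g (1 : ℚ)

/-- The coordinates of a central element of `ℚ[S_n]` in the basis of class sums:
the (average) coefficient on the conjugacy class of cycle type `Δ`. -/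
noncomputable def classCoeff {n : ℕ} (x : MonoidAlgebra ℚ (Equiv.Perm (Fin n)))
    (Δ : n.Partition) : ℚ :=
  (∑ g ∈ Finset.univ.filter (fun g => fullCycleType g = Δ.parts), x.coeff g) /
    ((Finset.univ.filter (fun g : Equiv.Perm (Fin n) => fullCycleType g = Δ.parts)).card : ℚ)

/-- An element of `A_n` (the centre of `ℚ[S_n]`), written in coordinates with respect to
the basis of class sums, viewed inside the group algebra. -/
noncomputable def embedCenter {n : ℕ} (x : n.Partition → ℚ) :
    MonoidAlgebra ℚ (Equiv.Perm (Fin n)) :=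
  ∑ Δ : n.Partition, x Δ • classSum n Δ

/-- The product `∘` of the algebra `A_n` in the coordinates given by class sums. -/
noncomputable def circ {n : ℕ} (x y : n.Partition → ℚ) : n.Partition → ℚ :=
  fun Δ => classCoeff (embedCenter x * embedCenter y) Δ

/-- The coordinates of a single Young diagram `Δ`, i.e. of the class sum `G_n(Δ) ∈ A_n`. -/
noncomputable def diagC {n : ℕ} (Δ : n.Partition) : n.Partition → ℚ :=
  fun Λ => if Λ = Δ then 1 else 0

/-- The padding map `ρ_{m-n} : A_n → A_m`,
`ρ_k(Δ) = ((r+k)!/(r!·k!))·Δ^k` where `r` is the number of rows of length 1 of `Δ`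
(in class-sum coordinates); it is `0` when `m < n`. -/
noncomputable def rhoTo {n : ℕ} (m : ℕ) (x : n.Partition → ℚ) : m.Partition → ℚ :=
  fun Λ =>
    if n ≤ m then
      ∑ Δ : n.Partition,
        (if Λ.parts = Δ.parts + Multiset.replicate (m - n) 1 then
          (((Δ.parts.count 1 + (m - n)).factorial : ℚ) /
            ((Δ.parts.count 1).factorial * (m - n).factorial)) * x Δ
        else 0)
    else 0

/-- The element `{Δ₁Δ₂}_n ∈ A_n`, defined by the recursion
`{Δ₁Δ₂}_n = ρ_{n−|Δ₁|}(Δ₁) ∘ ρ_{n−|Δ₂|}(Δ₂) − Σ_{k=max(|Δ₁|,|Δ₂|)}^{n−1} ρ_{n−k}({Δ₁Δ₂}_k)`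
for `max(|Δ₁|,|Δ₂|) ≤ n ≤ |Δ₁|+|Δ₂|` (and `0` outside this range). -/
noncomputable def bracket {n₁ n₂ : ℕ} (Δ₁ : n₁.Partition) (Δ₂ : n₂.Partition) :
    (n : ℕ) → n.Partition → ℚ
  | n =>
    if max n₁ n₂ ≤ n ∧ n ≤ n₁ + n₂ then
      circ (rhoTo n (diagC Δ₁)) (rhoTo n (diagC Δ₂)) -
        ∑ k ∈ (Finset.Ico (max n₁ n₂) n).attach,
          rhoTo n (bracket Δ₁ Δ₂ k.1)
    else 0
  termination_by n => n
  decreasing_by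
    have := Finset.mem_Ico.mp k.2
    omega

/-- The underlying graded vector space of the algebra `A_∞° = ⊕_n A_n`. -/
abbrev Ainf : Type := Π₀ n : ℕ, (Nat.Partition n → ℚ)

/-- A Young diagram `Δ` as an element of `A_∞°`. -/
noncomputable def ofDiag {n : ℕ} (Δ : n.Partition) : Ainf :=
  DFinsupp.single n (diagC Δ)

/-- The product of two Young diagrams in `A_∞°`:
`Δ₁·Δ₂ = Σ_{n=max(|Δ₁|,|Δ₂|)}^{|Δ₁|+|Δ₂|} {Δ₁Δ₂}_n`. -/
noncomputable def diagMul {n₁ n₂ : ℕ} (Δ₁ : n₁.Partition) (Δ₂ : n₂.Partition) : Ainf :=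
  ∑ n ∈ Finset.Icc (max n₁ n₂) (n₁ + n₂), DFinsupp.single n (bracket Δ₁ Δ₂ n)

/-- The bilinear extension of the product of Young diagrams to all of `A_∞°`. -/
noncomputable def mulAinf (x y : Ainf) : Ainf :=
  ∑ n₁ ∈ x.support, ∑ n₂ ∈ y.support,
    ∑ Δ₁ : Nat.Partition n₁, ∑ Δ₂ : Nat.Partition n₂,
      (x n₁ Δ₁ * y n₂ Δ₂) • diagMul Δ₁ Δ₂

/-!
Following Ivanov and Kerov, `ρ_{N-n}(Δ)` is the sum of `g` over the partial permutations `(I, g)` of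
`{1, …, N}`: an `n`-element set `I` containing the support of a permutation `g` of type `Δ`. In the
product of two such sums, collect the pairs `(I, g), (J, h)` according to the union `K = I ∪ J`,
whose size lies between `max(|Δ₁|, |Δ₂|)` and `|Δ₁| + |Δ₂|`. The pairs with a given union `K` do not
see the points outside `K`, so they contribute a copy of an element of `A_{|K|}` independent of `N`,
and summing over all `K` of size `n` is applying `ρ_{N-n}`. The recursion defining `{Δ₁Δ₂}_n` has
only one solution, so these elements are the `{Δ₁Δ₂}_n`.

All identities in `A_N` are checked on a conjugacy class after multiplying by the size of the class,
that is, by counting permutations in it.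
-/

open Equiv (Perm)
open Finset

/-! ### Partitions without their parts of size one -/

/-- The rows of length at least two of a Young diagram. This multiset is unchanged by padding, and
it is what Mathlib calls the cycle type of a permutation of type `Δ`. -/
def nontrivialParts {n : ℕ} (Δ : n.Partition) : Multiset ℕ :=
  Δ.parts.filter (2 ≤ ·)

section Partitions

variable {n N : ℕ}

lemma two_le_of_mem_nontrivialParts {Δ : n.Partition} {a : ℕ} (ha : a ∈ nontrivialParts Δ) :
    2 ≤ a :=
  Multiset.of_mem_filter ha

lemma add_replicate_one_inj {c d : Multiset ℕ} (hc : ∀ a ∈ c, 2 ≤ a) (hd : ∀ a ∈ d, 2 ≤ a)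
    {k l : ℕ} :
    c + Multiset.replicate k 1 = d + Multiset.replicate l 1 ↔ c = d ∧ k = l := by
  refine ⟨fun h ↦ ?_, by rintro ⟨rfl, rfl⟩; rfl⟩
  have filter_two_le : ∀ {b : Multiset ℕ}, (∀ a ∈ b, 2 ≤ a) → ∀ j : ℕ,
      (b + Multiset.replicate j 1).filter (2 ≤ ·) = b := fun hb j ↦ by
    rw [Multiset.filter_add, Multiset.filter_eq_self.2 hb, Multiset.filter_eq_nil.2, add_zero]
    intro a ha
    simp [Multiset.eq_of_mem_replicate ha]
  have hcd : c = d := by rw [← filter_two_le hc k, h, filter_two_le hd l]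
  subst hcd
  exact ⟨rfl, Multiset.replicate_left_injective 1 (add_left_cancel h)⟩

lemma nontrivialParts_add_replicate_count_one (Δ : n.Partition) :
    nontrivialParts Δ + Multiset.replicate (Δ.parts.count 1) 1 = Δ.parts := by
  have filter_one : Δ.parts.filter (¬ 2 ≤ ·) = Multiset.replicate (Δ.parts.count 1) 1 := by
    rw [← Multiset.filter_eq']
    refine Multiset.filter_congr fun a ha ↦ ?_
    have := Δ.parts_pos ha
    omega
  rw [← filter_one, nontrivialParts, Multiset.filter_add_not]

lemma sum_nontrivialParts_add_count_one (Δ : n.Partition) :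
    (nontrivialParts Δ).sum + Δ.parts.count 1 = n := by
  conv_rhs => rw [← Δ.parts_sum, ← nontrivialParts_add_replicate_count_one Δ]
  simp

lemma sum_nontrivialParts_le (Δ : n.Partition) : (nontrivialParts Δ).sum ≤ n :=
  (Nat.le_add_right _ _).trans_eq (sum_nontrivialParts_add_count_one Δ)

lemma exists_nontrivialParts_eq {c : Multiset ℕ} (hc : ∀ a ∈ c, 2 ≤ a) (hn : c.sum ≤ n) :
    ∃ Δ : n.Partition, nontrivialParts Δ = c := by
  let Δ : n.Partition :=
    { parts := c + Multiset.replicate (n - c.sum) 1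
      parts_pos := fun {i} hi ↦ by
        rcases Multiset.mem_add.1 hi with hi | hi
        · exact zero_lt_two.trans_le (hc i hi)
        · simp [Multiset.eq_of_mem_replicate hi]
      parts_sum := by simp [hn] }
  exact ⟨Δ, ((add_replicate_one_inj (fun _ ↦ two_le_of_mem_nontrivialParts) hc).1
    (nontrivialParts_add_replicate_count_one Δ)).1⟩

lemma parts_eq_add_replicate_iff (hnN : n ≤ N) (Δ : n.Partition) (Λ : N.Partition) :
    Λ.parts = Δ.parts + Multiset.replicate (N - n) 1 ↔
      nontrivialParts Δ = nontrivialParts Λ := by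
  have hΔ := sum_nontrivialParts_add_count_one Δ
  have hΛ := sum_nontrivialParts_add_count_one Λ
  rw [← nontrivialParts_add_replicate_count_one Δ, ← nontrivialParts_add_replicate_count_one Λ,
    add_assoc, ← Multiset.replicate_add, add_replicate_one_inj
      (fun _ ↦ two_le_of_mem_nontrivialParts) (fun _ ↦ two_le_of_mem_nontrivialParts), eq_comm]
  refine and_iff_left_of_imp fun h ↦ ?_
  rw [h] at hΔ
  omega

lemma nontrivialParts_injective : Function.Injective (nontrivialParts (n := n)) := fun Δ Λ h ↦ by
  simpa [Nat.Partition.ext_iff, eq_comm] using (parts_eq_add_replicate_iff le_rfl Δ Λ).2 h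

lemma fullCycleType_eq_parts_iff (g : Perm (Fin n)) (Δ : n.Partition) :
    fullCycleType g = Δ.parts ↔ g.cycleType = nontrivialParts Δ := by
  have hΔ := sum_nontrivialParts_add_count_one Δ
  rw [fullCycleType, ← nontrivialParts_add_replicate_count_one Δ, add_replicate_one_inj
    (fun _ ↦ Perm.two_le_of_mem_cycleType) (fun _ ↦ two_le_of_mem_nontrivialParts)]
  refine and_iff_left_of_imp fun h ↦ ?_
  rw [h]
  omega

lemma exists_nontrivialParts_eq_cycleType (g : Perm (Fin n)) :
    ∃ Δ : n.Partition, nontrivialParts Δ = g.cycleType :=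
  exists_nontrivialParts_eq (fun _ ↦ Perm.two_le_of_mem_cycleType)
    (by simpa using g.sum_cycleType_le)

end Partitions

/-! ### The padding map -/

section Padding

variable {n N : ℕ}

lemma rhoTo_apply_of_nontrivialParts_eq (hnN : n ≤ N) (x : n.Partition → ℚ) {Δ : n.Partition}
    {Λ : N.Partition} (h : nontrivialParts Δ = nontrivialParts Λ) :
    rhoTo N x Λ =
      (N - (nontrivialParts Λ).sum).choose (n - (nontrivialParts Λ).sum) * x Δ := by
  have hΔ := sum_nontrivialParts_add_count_one Δ
  rw [h] at hΔ
  have count_eq : Δ.parts.count 1 = n - (nontrivialParts Λ).sum := by omega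
  have add_eq : N - (nontrivialParts Λ).sum = n - (nontrivialParts Λ).sum + (N - n) := by omega
  rw [rhoTo, if_pos hnN, sum_eq_single_of_mem Δ (mem_univ Δ),
    if_pos ((parts_eq_add_replicate_iff hnN Δ Λ).2 h), count_eq, ← Nat.cast_add_choose, ← add_eq]
  intro Γ _ hΓ
  refine if_neg fun hpad ↦ hΓ (nontrivialParts_injective ?_)
  rw [(parts_eq_add_replicate_iff hnN Γ Λ).1 hpad, h]

lemma rhoTo_apply_eq_zero {x : n.Partition → ℚ} {Λ : N.Partition}
    (hx : ∀ Δ, nontrivialParts Δ = nontrivialParts Λ → x Δ = 0) : rhoTo N x Λ = 0 := by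
  rw [rhoTo]
  split_ifs with hnN
  · refine sum_eq_zero fun Δ _ ↦ ?_
    split_ifs with hpad
    · rw [hx Δ ((parts_eq_add_replicate_iff hnN Δ Λ).1 hpad), mul_zero]
    · rfl
  · rfl

lemma rhoTo_self (x : n.Partition → ℚ) : rhoTo n x = x := by
  funext Λ
  rw [rhoTo_apply_of_nontrivialParts_eq le_rfl x rfl, Nat.choose_self, Nat.cast_one, one_mul]

end Padding

/-! ### Transport to a subset -/

section Transport

variable {α β : Type*} {K : Finset α}

lemma map_asEmbedding_univ [Fintype β] (e : β ≃ K) : univ.map e.asEmbedding = K := by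
  rw [← coe_inj, coe_map, coe_univ, Set.image_univ, Equiv.asEmbedding_range]
  rfl

lemma exists_map_asEmbedding_eq (e : β ≃ K) {I : Finset α} (hI : I ⊆ K) :
    ∃ J : Finset β, J.map e.asEmbedding = I := by
  refine ⟨(I.subtype (· ∈ K)).map e.symm.toEmbedding, ?_⟩
  conv_rhs => rw [← subtype_map_of_mem (p := (· ∈ K)) fun _ hx ↦ hI hx]
  rw [map_map]
  congr 1
  ext x
  simp

lemma exists_extendDomain_eq [Fintype α] [DecidableEq α] (e : β ≃ K) {g : Perm α}
    (hg : g.support ⊆ K) : ∃ h : Perm β, h.extendDomain e = g := by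
  obtain ⟨k, rfl⟩ := Perm.mem_range_ofSubtype_iff.2 (show (g.support : Set α) ⊆ {x | x ∈ K} from hg)
  refine ⟨e.permCongr.symm k, ?_⟩
  rw [Perm.extendDomain, Equiv.apply_symm_apply]
  rfl

/-- The relabelling of partial permutations of `β` as partial permutations of `α` with domain
contained in `K`. -/
def extendPartialPerm [DecidableEq α] (e : β ≃ K) :
    Finset β × Perm β ↪ Finset α × Perm α :=
  (mapEmbedding e.asEmbedding).toEmbedding.prodMap ⟨_, Perm.extendDomainHom_injective e⟩

lemma extendPartialPerm_union_eq [DecidableEq α] [Fintype β] [DecidableEq β] (e : β ≃ K)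
    (p q : Finset β × Perm β) :
    (extendPartialPerm e p).1 ∪ (extendPartialPerm e q).1 = K ↔ p.1 ∪ q.1 = univ := by
  rw [← (map_injective e.asEmbedding).eq_iff, map_asEmbedding_univ, map_union]
  rfl

end Transport

/-! ### Conjugacy classes -/

section ConjugacyClasses

variable {α β : Type*} [Fintype α] [DecidableEq α]

variable (α) in
/-- The permutations of `α` of cycle type `c`, where `c` records the cycles of length at least two:
a conjugacy class, or empty when `c` is not a cycle type. -/
def cycleTypeClass (c : Multiset ℕ) : Finset (Perm α) := {g | g.cycleType = c}

@[simp]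
lemma mem_cycleTypeClass {c : Multiset ℕ} {g : Perm α} :
    g ∈ cycleTypeClass α c ↔ g.cycleType = c := by
  simp [cycleTypeClass]

lemma card_filter_support_subset_cycleTypeClass [Fintype β] [DecidableEq β] {K : Finset α}
    (e : β ≃ K) (c : Multiset ℕ) :
    #{g ∈ cycleTypeClass α c | g.support ⊆ K} = #(cycleTypeClass β c) := by
  rw [← card_map ⟨_, Perm.extendDomainHom_injective e⟩]
  refine congrArg card ?_
  ext g
  simp only [mem_filter, mem_map, mem_cycleTypeClass, Function.Embedding.coeFn_mk,
    Perm.extendDomainHom_apply]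
  constructor
  · rintro ⟨rfl, hgK⟩
    obtain ⟨h, rfl⟩ := exists_extendDomain_eq e hgK
    exact ⟨h, (Perm.cycleType_extendDomain e).symm, rfl⟩
  · rintro ⟨h, rfl, rfl⟩
    refine ⟨Perm.cycleType_extendDomain e, ?_⟩
    rw [Perm.support_extend_domain]
    exact (map_subset_map.2 (subset_univ _)).trans_eq (map_asEmbedding_univ e)

-- Double counting of the pairs `I ⊇ supp g` with `#I = n`.
lemma choose_mul_card_cycleTypeClass {c : Multiset ℕ} {n : ℕ} (hc : c.sum ≤ n) :
    (Fintype.card α - c.sum).choose (n - c.sum) * #(cycleTypeClass α c) =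
      (Fintype.card α).choose n * #(cycleTypeClass (Fin n) c) := by
  have card_supersets : ∀ g ∈ cycleTypeClass α c, #{I ∈ univ.powersetCard n | g.support ⊆ I} =
      (Fintype.card α - c.sum).choose (n - c.sum) := by
    intro g hg
    rw [mem_cycleTypeClass] at hg
    subst hg
    rw [Perm.sum_cycleType] at hc ⊢
    exact card_filter_powersetCard_subset _ _ n (subset_univ _) hc
  have card_perms : ∀ I ∈ (univ : Finset α).powersetCard n,
      #{g ∈ cycleTypeClass α c | g.support ⊆ I} = #(cycleTypeClass (Fin n) c) :=
    fun I hI ↦ card_filter_support_subset_cycleTypeClass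
      (I.equivFinOfCardEq (mem_powersetCard.1 hI).2).symm c
  have double_count := sum_card_bipartiteAbove_eq_sum_card_bipartiteBelow
    (s := (univ : Finset α).powersetCard n) (t := cycleTypeClass α c) (fun I g ↦ g.support ⊆ I)
  simp only [bipartiteAbove, bipartiteBelow] at double_count
  rw [sum_congr rfl card_perms, sum_congr rfl card_supersets] at double_count
  simpa [mul_comm] using double_count.symm

end ConjugacyClasses

section ClassCoordinates

variable {n N : ℕ}

lemma card_cycleTypeClass_nontrivialParts_ne_zero (Δ : n.Partition) :
    #(cycleTypeClass (Fin n) (nontrivialParts Δ)) ≠ 0 := by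
  rw [cycleTypeClass, Ne, Perm.card_of_cycleType_eq_zero_iff, not_not, Fintype.card_fin]
  exact ⟨sum_nontrivialParts_le Δ, fun _ ↦ two_le_of_mem_nontrivialParts⟩

lemma filter_fullCycleType_eq (Δ : n.Partition) :
    univ.filter (fun g : Perm (Fin n) ↦ fullCycleType g = Δ.parts) =
      cycleTypeClass (Fin n) (nontrivialParts Δ) := by
  simp only [fullCycleType_eq_parts_iff, cycleTypeClass]

lemma coeff_embedCenter (x : n.Partition → ℚ) {g : Perm (Fin n)} {Λ : n.Partition}
    (hg : nontrivialParts Λ = g.cycleType) : (embedCenter x).coeff g = x Λ := by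
  have coeff_classSum : ∀ Δ : n.Partition,
      (classSum n Δ).coeff g = if Δ = Λ then 1 else 0 := by
    intro Δ
    rw [classSum, filter_fullCycleType_eq]
    simp [Finsupp.single_apply, ← hg, nontrivialParts_injective.eq_iff, eq_comm]
  simp [embedCenter, coeff_classSum]

lemma circ_mul_card_cycleTypeClass (x y : n.Partition → ℚ) (Λ : n.Partition) :
    circ x y Λ * #(cycleTypeClass (Fin n) (nontrivialParts Λ)) =
      ∑ g ∈ cycleTypeClass (Fin n) (nontrivialParts Λ),
        (embedCenter x * embedCenter y).coeff g := by
  rw [circ, classCoeff, filter_fullCycleType_eq, div_mul_cancel₀]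
  exact_mod_cast card_cycleTypeClass_nontrivialParts_ne_zero Λ

lemma rhoTo_mul_card_cycleTypeClass (hnN : n ≤ N) (x : n.Partition → ℚ) {Δ : n.Partition}
    {Λ : N.Partition} (h : nontrivialParts Δ = nontrivialParts Λ) :
    rhoTo N x Λ * #(cycleTypeClass (Fin N) (nontrivialParts Λ)) =
      N.choose n * (x Δ * #(cycleTypeClass (Fin n) (nontrivialParts Δ))) := by
  have hsum : (nontrivialParts Λ).sum ≤ n := h ▸ sum_nontrivialParts_le Δ
  have hcard := choose_mul_card_cycleTypeClass (α := Fin N) hsum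
  rw [Fintype.card_fin] at hcard
  rw [rhoTo_apply_of_nontrivialParts_eq hnN x h, mul_right_comm, h]
  calc _ = ((N.choose n * #(cycleTypeClass (Fin n) (nontrivialParts Λ)) : ℕ) : ℚ) * x Δ := by
        rw [← hcard, Nat.cast_mul]
    _ = _ := by push_cast; ring

end ClassCoordinates

/-! ### Partial permutations -/

section PartialPermutations

variable (α : Type*) [Fintype α] [DecidableEq α] {β : Type*}

/-- The partial permutations `(I, g)` of `α` with `#I = n` and `g` of cycle type `c`. The
permutation of `I` is encoded by its extension `g` to `α` fixing the points outside `I`. -/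
def partialPerms (n : ℕ) (c : Multiset ℕ) : Finset (Finset α × Perm α) :=
  {p | #p.1 = n ∧ p.2.support ⊆ p.1 ∧ p.2.cycleType = c}

/-- The pairs of partial permutations `(I, g)`, `(J, h)` of types `c₁`, `c₂` such that `g * h` has
cycle type `c`. -/
def partialPermPairs (n₁ n₂ : ℕ) (c₁ c₂ c : Multiset ℕ) :
    Finset ((Finset α × Perm α) × (Finset α × Perm α)) :=
  {z ∈ partialPerms α n₁ c₁ ×ˢ partialPerms α n₂ c₂ | (z.1.2 * z.2.2).cycleType = c}

/-- The number of pairs of partial permutations of `{1, …, n}` of types `c₁`, `c₂` whose domains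
cover `{1, …, n}` and whose product has cycle type `c`. -/
def coveringPairCount (n₁ n₂ : ℕ) (c₁ c₂ c : Multiset ℕ) (n : ℕ) : ℕ :=
  #{z ∈ partialPermPairs (Fin n) n₁ n₂ c₁ c₂ c | z.1.1 ∪ z.2.1 = univ}

variable {α} {n n₁ n₂ : ℕ} {c c₁ c₂ : Multiset ℕ} {K : Finset α}

lemma mem_partialPerms {p : Finset α × Perm α} :
    p ∈ partialPerms α n c ↔ #p.1 = n ∧ p.2.support ⊆ p.1 ∧ p.2.cycleType = c := by
  simp [partialPerms]

lemma mem_partialPermPairs {p q : Finset α × Perm α} :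
    (p, q) ∈ partialPermPairs α n₁ n₂ c₁ c₂ c ↔
      p ∈ partialPerms α n₁ c₁ ∧ q ∈ partialPerms α n₂ c₂ ∧ (p.2 * q.2).cycleType = c := by
  simp [partialPermPairs, and_assoc]

lemma card_filter_snd_eq_partialPerms {g : Perm α} (hg : g.cycleType.sum ≤ n) :
    #{p ∈ partialPerms α n g.cycleType | p.2 = g} =
      (Fintype.card α - g.cycleType.sum).choose (n - g.cycleType.sum) := by
  have fiber_eq : {p ∈ partialPerms α n g.cycleType | p.2 = g} =
      {I ∈ (univ : Finset α).powersetCard n | g.support ⊆ I}.map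
        ⟨fun I ↦ (I, g), Prod.mk_left_injective g⟩ := by
    ext ⟨I, h⟩
    simp only [mem_filter, mem_partialPerms, mem_map, mem_powersetCard, subset_univ, true_and,
      Function.Embedding.coeFn_mk, Prod.mk.injEq]
    constructor
    · rintro ⟨⟨hI, hgI, -⟩, rfl⟩
      exact ⟨I, ⟨hI, hgI⟩, rfl, rfl⟩
    · rintro ⟨I, ⟨hI, hgI⟩, rfl, rfl⟩
      exact ⟨⟨hI, hgI, rfl⟩, rfl⟩
  rw [Perm.sum_cycleType] at hg ⊢
  rw [fiber_eq, card_map, card_filter_powersetCard_subset _ _ n (subset_univ _) hg, card_univ]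

lemma extendPartialPerm_mem_partialPerms [Fintype β] [DecidableEq β] (e : β ≃ K)
    (p : Finset β × Perm β) :
    extendPartialPerm e p ∈ partialPerms α n c ↔ p ∈ partialPerms β n c := by
  simp [mem_partialPerms, extendPartialPerm, Perm.support_extend_domain]

lemma extendPartialPerm_mem_partialPermPairs [Fintype β] [DecidableEq β] (e : β ≃ K)
    (p q : Finset β × Perm β) :
    (extendPartialPerm e p, extendPartialPerm e q) ∈ partialPermPairs α n₁ n₂ c₁ c₂ c ↔
      (p, q) ∈ partialPermPairs β n₁ n₂ c₁ c₂ c := by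
  rw [mem_partialPermPairs, mem_partialPermPairs, extendPartialPerm_mem_partialPerms,
    extendPartialPerm_mem_partialPerms]
  simp [extendPartialPerm]

lemma exists_extendPartialPerm_eq (e : β ≃ K) {p : Finset α × Perm α}
    (hp : p ∈ partialPerms α n c) (hK : p.1 ⊆ K) : ∃ q, extendPartialPerm e q = p := by
  obtain ⟨J, hJ⟩ := exists_map_asEmbedding_eq e hK
  obtain ⟨h, hh⟩ := exists_extendDomain_eq e ((mem_partialPerms.1 hp).2.1.trans hK)
  exact ⟨(J, h), Prod.ext hJ hh⟩

lemma card_filter_union_eq_partialPermPairs (K : Finset α) :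
    #{z ∈ partialPermPairs α n₁ n₂ c₁ c₂ c | z.1.1 ∪ z.2.1 = K} =
      coveringPairCount n₁ n₂ c₁ c₂ c #K := by
  let extend := extendPartialPerm K.equivFin.symm
  rw [coveringPairCount, ← card_map (extend.prodMap extend)]
  refine congrArg card ?_
  ext ⟨p, q⟩
  simp only [mem_filter, mem_map, Function.Embedding.coe_prodMap]
  constructor
  · rintro ⟨hpq, hK⟩
    obtain ⟨hp, hq, -⟩ := mem_partialPermPairs.1 hpq
    obtain ⟨p, rfl⟩ := exists_extendPartialPerm_eq K.equivFin.symm hp (hK ▸ subset_union_left)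
    obtain ⟨q, rfl⟩ := exists_extendPartialPerm_eq K.equivFin.symm hq (hK ▸ subset_union_right)
    exact ⟨(p, q), ⟨(extendPartialPerm_mem_partialPermPairs _ p q).1 hpq,
      (extendPartialPerm_union_eq _ p q).1 hK⟩, rfl⟩
  · rintro ⟨⟨p, q⟩, ⟨hpq, hcover⟩, ⟨⟩⟩
    exact ⟨(extendPartialPerm_mem_partialPermPairs _ p q).2 hpq,
      (extendPartialPerm_union_eq _ p q).2 hcover⟩

lemma mem_Icc_of_coveringPairCount_ne_zero (h : coveringPairCount n₁ n₂ c₁ c₂ c n ≠ 0) :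
    n ∈ Icc (max n₁ n₂) (n₁ + n₂) := by
  obtain ⟨⟨p, q⟩, hpq⟩ := card_ne_zero.1 h
  obtain ⟨hpq, hcover⟩ := mem_filter.1 hpq
  obtain ⟨hp, hq, -⟩ := mem_partialPermPairs.1 hpq
  have hp_card := (mem_partialPerms.1 hp).1
  have hq_card := (mem_partialPerms.1 hq).1
  have hp_le := card_le_univ p.1
  have hq_le := card_le_univ q.1
  have hcover_le := card_union_le p.1 q.1
  rw [hcover, card_univ] at hcover_le
  rw [Fintype.card_fin] at hp_le hq_le hcover_le
  rw [mem_Icc]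
  omega

lemma exists_cycleType_eq_of_coveringPairCount_ne_zero
    (h : coveringPairCount n₁ n₂ c₁ c₂ c n ≠ 0) : ∃ g : Perm (Fin n), g.cycleType = c := by
  obtain ⟨⟨p, q⟩, hpq⟩ := card_ne_zero.1 h
  exact ⟨p.2 * q.2, (mem_partialPermPairs.1 (mem_filter.1 hpq).1).2.2⟩

variable (α) in
lemma card_partialPermPairs (n₁ n₂ : ℕ) (c₁ c₂ c : Multiset ℕ) :
    #(partialPermPairs α n₁ n₂ c₁ c₂ c) =
      ∑ n ∈ Icc (max n₁ n₂) (min (Fintype.card α) (n₁ + n₂)),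
        (Fintype.card α).choose n * coveringPairCount n₁ n₂ c₁ c₂ c n := by
  calc #(partialPermPairs α n₁ n₂ c₁ c₂ c)
      = ∑ K : Finset α, coveringPairCount n₁ n₂ c₁ c₂ c #K := by
        rw [card_eq_sum_card_fiberwise (f := fun z ↦ z.1.1 ∪ z.2.1) (t := univ)
          fun _ _ ↦ mem_coe.2 (mem_univ _)]
        exact sum_congr rfl fun K _ ↦ card_filter_union_eq_partialPermPairs K
    _ = ∑ n ∈ range (Fintype.card α + 1),
          (Fintype.card α).choose n * coveringPairCount n₁ n₂ c₁ c₂ c n := by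
        rw [← powerset_univ, sum_powerset_apply_card, card_univ]
        rfl
    _ = _ := by
        refine (sum_subset (fun n hn ↦ ?_) fun n hn hn' ↦ ?_).symm
        · rw [mem_Icc] at hn
          rw [mem_range]
          omega
        · refine mul_eq_zero_of_right _ (not_not.1 fun hne ↦ hn' ?_)
          have := mem_Icc.1 (mem_Icc_of_coveringPairCount_ne_zero hne)
          rw [mem_range] at hn
          rw [mem_Icc]
          omega

end PartialPermutations

/-! ### Products of padded class sums -/

section Products

variable {n n₁ n₂ N : ℕ}

lemma embedCenter_rhoTo_diagC (hnN : n ≤ N) (Δ : n.Partition) :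
    embedCenter (rhoTo N (diagC Δ)) =
      ∑ p ∈ partialPerms (Fin N) n (nontrivialParts Δ), MonoidAlgebra.single p.2 (1 : ℚ) := by
  ext g
  obtain ⟨Λ, hΛ⟩ := exists_nontrivialParts_eq_cycleType g
  have coeff_sum :
      (∑ p ∈ partialPerms (Fin N) n (nontrivialParts Δ), MonoidAlgebra.single p.2 (1 : ℚ)).coeff g
        = #{p ∈ partialPerms (Fin N) n (nontrivialParts Δ) | p.2 = g} := by
    simp [Finsupp.single_apply]
  rw [coeff_embedCenter _ hΛ, coeff_sum]
  by_cases hΔ : nontrivialParts Δ = g.cycleType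
  · have hsum : g.cycleType.sum ≤ n := hΔ ▸ sum_nontrivialParts_le Δ
    rw [rhoTo_apply_of_nontrivialParts_eq hnN _ (hΔ.trans hΛ.symm), hΛ, hΔ,
      card_filter_snd_eq_partialPerms hsum, Fintype.card_fin, diagC, if_pos rfl, mul_one]
  · have fiber_empty : {p ∈ partialPerms (Fin N) n (nontrivialParts Δ) | p.2 = g} = ∅ := by
      refine filter_eq_empty_iff.2 fun p hp hpg ↦ hΔ ?_
      rw [← hpg, (mem_partialPerms.1 hp).2.2]
    rw [fiber_empty, card_empty, Nat.cast_zero]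
    refine rhoTo_apply_eq_zero fun Γ hΓ ↦ if_neg ?_
    rintro rfl
    exact hΔ (hΓ.trans hΛ)

lemma circ_rhoTo_mul_card_cycleTypeClass (h₁ : n₁ ≤ N) (h₂ : n₂ ≤ N) (Δ₁ : n₁.Partition)
    (Δ₂ : n₂.Partition) (Λ : N.Partition) :
    circ (rhoTo N (diagC Δ₁)) (rhoTo N (diagC Δ₂)) Λ *
        #(cycleTypeClass (Fin N) (nontrivialParts Λ)) =
      #(partialPermPairs (Fin N) n₁ n₂ (nontrivialParts Δ₁) (nontrivialParts Δ₂)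
        (nontrivialParts Λ)) := by
  rw [circ_mul_card_cycleTypeClass, embedCenter_rhoTo_diagC h₁, embedCenter_rhoTo_diagC h₂,
    sum_mul_sum, ← sum_product', partialPermPairs, ← sum_boole]
  simp only [MonoidAlgebra.single_mul_single, mul_one, MonoidAlgebra.coeff_sum,
    MonoidAlgebra.coeff_single, Finsupp.coe_finsetSum, Finset.sum_apply, Finsupp.single_apply]
  rw [sum_comm]
  refine sum_congr rfl fun z _ ↦ ?_
  rw [sum_ite_eq]
  simp only [mem_cycleTypeClass]

/-- The sum of the products `g * h` over the pairs of partial permutations `(I, g)`, `(J, h)` of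
types `Δ₁`, `Δ₂` with `I ∪ J = {1, …, n}`, as an element of `A_n` in class-sum coordinates. Unlike
`bracket` it is defined without recursion. -/
noncomputable def coveringProduct (Δ₁ : n₁.Partition) (Δ₂ : n₂.Partition) (n : ℕ) :
    n.Partition → ℚ :=
  fun Λ ↦ coveringPairCount n₁ n₂ (nontrivialParts Δ₁) (nontrivialParts Δ₂) (nontrivialParts Λ) n /
    #(cycleTypeClass (Fin n) (nontrivialParts Λ))

lemma rhoTo_coveringProduct_mul_card_cycleTypeClass (Δ₁ : n₁.Partition) (Δ₂ : n₂.Partition)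
    (hnN : n ≤ N) (Λ : N.Partition) :
    rhoTo N (coveringProduct Δ₁ Δ₂ n) Λ * #(cycleTypeClass (Fin N) (nontrivialParts Λ)) =
      N.choose n * coveringPairCount n₁ n₂ (nontrivialParts Δ₁) (nontrivialParts Δ₂)
        (nontrivialParts Λ) n := by
  by_cases hΛ : ∃ Δ : n.Partition, nontrivialParts Δ = nontrivialParts Λ
  · obtain ⟨Δ, hΔ⟩ := hΛ
    rw [rhoTo_mul_card_cycleTypeClass hnN _ hΔ, coveringProduct, div_mul_cancel₀, hΔ]
    exact_mod_cast card_cycleTypeClass_nontrivialParts_ne_zero Δ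
  · have count_eq_zero : coveringPairCount n₁ n₂ (nontrivialParts Δ₁) (nontrivialParts Δ₂)
        (nontrivialParts Λ) n = 0 := by
      by_contra hne
      obtain ⟨g, hg⟩ := exists_cycleType_eq_of_coveringPairCount_ne_zero hne
      exact hΛ (hg ▸ exists_nontrivialParts_eq_cycleType g)
    rw [rhoTo_apply_eq_zero fun Δ hΔ ↦ absurd ⟨Δ, hΔ⟩ hΛ, count_eq_zero, zero_mul, Nat.cast_zero,
      mul_zero]

lemma circ_rhoTo_eq_sum_rhoTo_coveringProduct (Δ₁ : n₁.Partition) (Δ₂ : n₂.Partition)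
    (hN : max n₁ n₂ ≤ N) :
    circ (rhoTo N (diagC Δ₁)) (rhoTo N (diagC Δ₂)) =
      ∑ n ∈ Icc (max n₁ n₂) (min N (n₁ + n₂)), rhoTo N (coveringProduct Δ₁ Δ₂ n) := by
  funext Λ
  have hclass : (#(cycleTypeClass (Fin N) (nontrivialParts Λ)) : ℚ) ≠ 0 :=
    mod_cast card_cycleTypeClass_nontrivialParts_ne_zero Λ
  refine mul_right_cancel₀ hclass ?_
  rw [circ_rhoTo_mul_card_cycleTypeClass (le_of_max_le_left hN) (le_of_max_le_right hN),
    card_partialPermPairs, Fintype.card_fin, Finset.sum_apply, sum_mul, Nat.cast_sum]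
  refine sum_congr rfl fun n hn ↦ ?_
  have hnN : n ≤ N := (mem_Icc.1 hn).2.trans (min_le_left _ _)
  rw [rhoTo_coveringProduct_mul_card_cycleTypeClass Δ₁ Δ₂ hnN, Nat.cast_mul]

lemma bracket_add_sum_rhoTo_bracket (Δ₁ : n₁.Partition) (Δ₂ : n₂.Partition)
    (hn : n ∈ Icc (max n₁ n₂) (n₁ + n₂)) :
    bracket Δ₁ Δ₂ n + ∑ k ∈ Ico (max n₁ n₂) n, rhoTo n (bracket Δ₁ Δ₂ k) =
      circ (rhoTo n (diagC Δ₁)) (rhoTo n (diagC Δ₂)) := by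
  rw [bracket, if_pos (mem_Icc.1 hn),
    sum_attach (Ico (max n₁ n₂) n) fun k ↦ rhoTo n (bracket Δ₁ Δ₂ k), sub_add_cancel]

lemma bracket_eq_of_circ_rhoTo_eq_sum (Δ₁ : n₁.Partition) (Δ₂ : n₂.Partition)
    {b : (n : ℕ) → n.Partition → ℚ}
    (hb : ∀ n ∈ Icc (max n₁ n₂) (n₁ + n₂), circ (rhoTo n (diagC Δ₁)) (rhoTo n (diagC Δ₂)) =
      ∑ k ∈ Icc (max n₁ n₂) n, rhoTo n (b k))
    (hn : n ∈ Icc (max n₁ n₂) (n₁ + n₂)) : bracket Δ₁ Δ₂ n = b n := by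
  induction n using Nat.strong_induction_on with
  | _ n ih =>
    obtain ⟨hmax, hadd⟩ := mem_Icc.1 hn
    have lower_terms : ∑ k ∈ Ico (max n₁ n₂) n, rhoTo n (bracket Δ₁ Δ₂ k) =
        ∑ k ∈ Ico (max n₁ n₂) n, rhoTo n (b k) := by
      refine sum_congr rfl fun k hk ↦ ?_
      obtain ⟨hk_ge, hk_lt⟩ := mem_Ico.1 hk
      rw [ih k hk_lt (mem_Icc.2 ⟨hk_ge, hk_lt.le.trans hadd⟩)]
    have recursion := bracket_add_sum_rhoTo_bracket Δ₁ Δ₂ hn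
    rw [hb n hn, ← Ico_insert_right hmax, sum_insert right_notMem_Ico, rhoTo_self,
      lower_terms] at recursion
    exact add_right_cancel recursion

lemma bracket_eq_coveringProduct (Δ₁ : n₁.Partition) (Δ₂ : n₂.Partition)
    (hn : n ∈ Icc (max n₁ n₂) (n₁ + n₂)) : bracket Δ₁ Δ₂ n = coveringProduct Δ₁ Δ₂ n := by
  refine bracket_eq_of_circ_rhoTo_eq_sum Δ₁ Δ₂ (fun m hm ↦ ?_) hn
  obtain ⟨hmax, hadd⟩ := mem_Icc.1 hm
  rw [circ_rhoTo_eq_sum_rhoTo_coveringProduct Δ₁ Δ₂ hmax, min_eq_left hadd]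

end Products

theorem stability_of_products_of_padded_class_sums
    {n₁ n₂ : ℕ} (Δ₁ : Nat.Partition n₁) (Δ₂ : Nat.Partition n₂) (N : ℕ)
    (hN : max n₁ n₂ ≤ N) :
    circ (rhoTo N (diagC Δ₁)) (rhoTo N (diagC Δ₂)) =
      ∑ n ∈ Finset.Icc (max n₁ n₂) (min N (n₁ + n₂)), rhoTo N (bracket Δ₁ Δ₂ n) := by
  rw [circ_rhoTo_eq_sum_rhoTo_coveringProduct Δ₁ Δ₂ hN]
  refine sum_congr rfl fun n hn ↦ ?_
  rw [bracket_eq_coveringProduct Δ₁ Δ₂ (Icc_subset_Icc_right (min_le_right _ _) hn)]
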